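/- For all complex numbers α, β and every nonzero complex number q, the 4×4 matrix R_{α,β,q} = [[α, 0, 0, β·q], [0, −β, α, 0], [0, α, −β, 0], [β·q⁻¹, 0, 0, α]] satisfies the braided parameter-independent Yang–Baxter equation (R ⊗ I₂)(I₂ ⊗ R)(R ⊗ I₂) = (I₂ ⊗ R)(R ⊗ I₂)(I₂ ⊗ R) with R = R_{α,β,q}. -/

import Mathlib

/-!
Let `P` be the flip of `ℂ² ⊗ ℂ²` and `A = !![0, q; -1, 0]`. Then `R_{α,β,q} = S P` with
`S = α + β A ⊗ q⁻¹A`. Moving all flips to the right turns the braided equation for `S P` into the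
quantum Yang–Baxter equation `S₁₂ S₁₃ S₂₃ = S₂₃ S₁₃ S₁₂`, because the flips permute the
factors `S₁₂`, `S₁₃`, `S₂₃` and themselves satisfy the braid relation. For this `S` the three
factors are polynomials in copies of the single matrix `A` acting on different tensor factors, so
they commute.
-/

open Matrix Complex
open scoped Kronecker

/-- The general family R_{α,β,q}. -/
noncomputable def Rg (α β q : ℂ) : Matrix (Fin 4) (Fin 4) ℂ :=
  !![α, 0, 0, β * q; 0, -β, α, 0; 0, α, -β, 0; β * q⁻¹, 0, 0, α]

/-- R ⊗ I₂ as an 8×8 matrix. -/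
noncomputable def RI (R : Matrix (Fin 4) (Fin 4) ℂ) : Matrix (Fin 8) (Fin 8) ℂ :=
  Matrix.reindex finProdFinEquiv finProdFinEquiv (R ⊗ₖ (1 : Matrix (Fin 2) (Fin 2) ℂ))

/-- I₂ ⊗ R as an 8×8 matrix. -/
noncomputable def IR (R : Matrix (Fin 4) (Fin 4) ℂ) : Matrix (Fin 8) (Fin 8) ℂ :=
  Matrix.reindex finProdFinEquiv finProdFinEquiv ((1 : Matrix (Fin 2) (Fin 2) ℂ) ⊗ₖ R)

/-- With `p`, `r` the flips of adjacent tensor factors, `s = S₁₂`, `t = S₁₃` and `u = S₂₃`. -/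
theorem braid_relation_of_semiconjBy {M : Type*} [Monoid M] {p r s t u : M}
    (hbraid : p * r * p = r * p * r) (hpu : SemiconjBy p u t) (hpt : SemiconjBy p t u)
    (hrs : SemiconjBy r s t) (hrt : SemiconjBy r t s) (hstu : s * t * u = u * t * s) :
    (s * p) * (u * r) * (s * p) = (u * r) * (s * p) * (u * r) :=
  calc (s * p) * (u * r) * (s * p)
    _ = s * (p * u) * (r * s) * p := by simp only [mul_assoc]
    _ = s * t * (p * t) * r * p := by rw [hpu.eq, hrs.eq]; simp only [mul_assoc]
    _ = (s * t * u) * (p * r * p) := by rw [hpt.eq]; simp only [mul_assoc]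
    _ = (u * t * s) * (r * p * r) := by rw [hstu, hbraid]
    _ = u * t * (s * r) * p * r := by simp only [mul_assoc]
    _ = u * (t * r) * (t * p) * r := by rw [← hrt.eq]; simp only [mul_assoc]
    _ = (u * r) * (s * p) * (u * r) := by rw [← hrs.eq, ← hpu.eq]; simp only [mul_assoc]

theorem semiconjBy_permMatrix {m R : Type*} [Fintype m] [DecidableEq m] [NonAssocSemiring R]
    (σ : Equiv.Perm m) (M : Matrix m m R) :
    SemiconjBy (σ.permMatrix R) M (M.submatrix σ σ) := by
  rw [SemiconjBy, PEquiv.toMatrix_toPEquiv_mul, PEquiv.mul_toMatrix_toPEquiv]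
  ext i j
  simp only [submatrix_apply, id_eq, Equiv.apply_symm_apply]

theorem commute_smul_one_add_smul {K R : Type*} [CommSemiring K] [Semiring R] [Algebra K R]
    {X Y : R} (hXY : Commute X Y) (α β γ δ : K) :
    Commute (α • 1 + β • X) (γ • 1 + δ • Y) := by
  have hX : Commute X (γ • 1 + δ • Y) :=
    ((Commute.one_right X).smul_right γ).add_right (hXY.smul_right δ)
  exact ((Commute.one_left _).smul_left α).add_left (hX.smul_left β)

section Legs

variable {n K : Type*} [Fintype n] [DecidableEq n] [CommSemiring K]

/-- The embedding `S ↦ S₁₂ = S ⊗ 1` of operators on `V ⊗ V` into operators on `V ⊗ V ⊗ V`, where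
`V = Kⁿ`. -/
def leg₁₂ : Matrix (n × n) (n × n) K →ₐ[K] Matrix (n × n × n) (n × n × n) K :=
  (reindexAlgEquiv K K (Equiv.prodAssoc n n n)).toAlgHom.comp <| AlgHom.ofLinearMap
    { toFun S := S ⊗ₖ (1 : Matrix n n K)
      map_add' S T := add_kronecker S T 1
      map_smul' c S := smul_kronecker c S 1 }
    one_kronecker_one
    fun S T ↦ by simpa using mul_kronecker_mul S T (1 : Matrix n n K) 1

/-- The embedding `S ↦ S₂₃ = 1 ⊗ S` of operators on `V ⊗ V` into operators on `V ⊗ V ⊗ V`. -/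
def leg₂₃ : Matrix (n × n) (n × n) K →ₐ[K] Matrix (n × n × n) (n × n × n) K :=
  AlgHom.ofLinearMap
    { toFun S := (1 : Matrix n n K) ⊗ₖ S
      map_add' := kronecker_add 1
      map_smul' c S := kronecker_smul c 1 S }
    one_kronecker_one
    fun S T ↦ by simpa using mul_kronecker_mul (1 : Matrix n n K) 1 S T

variable (n) in
/-- The exchange of the first two tensor factors, on basis indices. -/
def swap₁₂ : Equiv.Perm (n × n × n) :=
  (Equiv.prodAssoc n n n).permCongr ((Equiv.prodComm n n).prodCongr (.refl n))

variable (n) in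
/-- The exchange of the last two tensor factors, on basis indices. -/
def swap₂₃ : Equiv.Perm (n × n × n) :=
  (Equiv.refl n).prodCongr (Equiv.prodComm n n)

/-- The embedding `S ↦ S₁₃` of operators on `V ⊗ V` into operators on `V ⊗ V ⊗ V`, acting on the
outer factors; it is `leg₁₂` conjugated by the exchange of the last two factors. -/
def leg₁₃ : Matrix (n × n) (n × n) K →ₐ[K] Matrix (n × n × n) (n × n × n) K :=
  (reindexAlgEquiv K K (swap₂₃ n)).toAlgHom.comp leg₁₂

theorem leg₁₂_eq_reindex (S : Matrix (n × n) (n × n) K) :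
    leg₁₂ S = reindex (Equiv.prodAssoc n n n) (Equiv.prodAssoc n n n) (S ⊗ₖ (1 : Matrix n n K)) :=
  rfl

theorem leg₂₃_eq_kronecker (S : Matrix (n × n) (n × n) K) : leg₂₃ S = (1 : Matrix n n K) ⊗ₖ S :=
  rfl

theorem leg₁₃_eq_submatrix_leg₁₂ (S : Matrix (n × n) (n × n) K) :
    leg₁₃ S = (leg₁₂ S).submatrix (swap₂₃ n) (swap₂₃ n) :=
  rfl

theorem leg₁₂_eq_submatrix_leg₁₃ (S : Matrix (n × n) (n × n) K) :
    leg₁₂ S = (leg₁₃ S).submatrix (swap₂₃ n) (swap₂₃ n) :=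
  rfl

theorem leg₁₃_eq_submatrix_leg₂₃ (S : Matrix (n × n) (n × n) K) :
    leg₁₃ S = (leg₂₃ S).submatrix (swap₁₂ n) (swap₁₂ n) := by
  ext ⟨i, j, k⟩ ⟨i', j', k'⟩
  exact mul_comm (S (i, k) (i', k')) ((1 : Matrix n n K) j j')

theorem leg₂₃_eq_submatrix_leg₁₃ (S : Matrix (n × n) (n × n) K) :
    leg₂₃ S = (leg₁₃ S).submatrix (swap₁₂ n) (swap₁₂ n) := by
  rw [leg₁₃_eq_submatrix_leg₂₃]
  rfl

theorem leg₁₂_kronecker (A B : Matrix n n K) : leg₁₂ (A ⊗ₖ B) = A ⊗ₖ (B ⊗ₖ (1 : Matrix n n K)) := by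
  rw [leg₁₂_eq_reindex, kronecker_assoc]

theorem leg₁₃_kronecker (A B : Matrix n n K) : leg₁₃ (A ⊗ₖ B) = A ⊗ₖ ((1 : Matrix n n K) ⊗ₖ B) := by
  rw [leg₁₃_eq_submatrix_leg₁₂, leg₁₂_kronecker]
  ext ⟨i, j, k⟩ ⟨i', j', k'⟩
  exact congrArg (A i i' * ·) (mul_comm (B k k') ((1 : Matrix n n K) j j'))

variable (n K) in
/-- The flip `v ⊗ w ↦ w ⊗ v` of `V ⊗ V`. -/
def flipMatrix : Matrix (n × n) (n × n) K :=
  Equiv.Perm.permMatrix K (Equiv.prodComm n n)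

theorem leg₁₂_flipMatrix : leg₁₂ (flipMatrix n K) = (swap₁₂ n).permMatrix K := by
  rw [flipMatrix, Equiv.Perm.permMatrix, Equiv.Perm.permMatrix, PEquiv.toMatrix_toPEquiv_eq,
    PEquiv.toMatrix_toPEquiv_eq, ← map_one leg₁₂]
  rfl

theorem leg₂₃_flipMatrix : leg₂₃ (flipMatrix n K) = (swap₂₃ n).permMatrix K := by
  rw [flipMatrix, Equiv.Perm.permMatrix, Equiv.Perm.permMatrix, PEquiv.toMatrix_toPEquiv_eq,
    PEquiv.toMatrix_toPEquiv_eq, ← map_one leg₂₃]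
  rfl

/-- The braided Yang–Baxter equation `R₁₂ R₂₃ R₁₂ = R₂₃ R₁₂ R₂₃`. -/
def IsBraided (R : Matrix (n × n) (n × n) K) : Prop :=
  leg₁₂ R * leg₂₃ R * leg₁₂ R = leg₂₃ R * leg₁₂ R * leg₂₃ R

/-- The quantum Yang–Baxter equation `S₁₂ S₁₃ S₂₃ = S₂₃ S₁₃ S₁₂`, which is equivalent to the braided
equation for `S` composed with the flip. -/
def IsYangBaxter (S : Matrix (n × n) (n × n) K) : Prop :=
  leg₁₂ S * leg₁₃ S * leg₂₃ S = leg₂₃ S * leg₁₃ S * leg₁₂ S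

theorem isBraided_flipMatrix : IsBraided (flipMatrix n K) := by
  simp only [IsBraided, leg₁₂_flipMatrix, leg₂₃_flipMatrix, ← permMatrix_mul]
  rfl

theorem IsYangBaxter.isBraided_mul_flipMatrix {S : Matrix (n × n) (n × n) K}
    (hS : IsYangBaxter S) : IsBraided (S * flipMatrix n K) := by
  simp only [IsBraided, map_mul]
  refine braid_relation_of_semiconjBy isBraided_flipMatrix (t := leg₁₃ S) ?_ ?_ ?_ ?_ hS
  · rw [leg₁₂_flipMatrix, leg₁₃_eq_submatrix_leg₂₃]
    exact semiconjBy_permMatrix _ _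
  · rw [leg₁₂_flipMatrix, leg₂₃_eq_submatrix_leg₁₃]
    exact semiconjBy_permMatrix _ _
  · rw [leg₂₃_flipMatrix, leg₁₃_eq_submatrix_leg₁₂]
    exact semiconjBy_permMatrix _ _
  · rw [leg₂₃_flipMatrix, leg₁₂_eq_submatrix_leg₁₃]
    exact semiconjBy_permMatrix _ _

theorem isYangBaxter_smul_one_add_smul_kronecker {A B : Matrix n n K} (hAB : Commute A B)
    (α β : K) : IsYangBaxter (α • 1 + β • A ⊗ₖ B) := by
  have h₁₂₁₃ : Commute (leg₁₂ (A ⊗ₖ B)) (leg₁₃ (A ⊗ₖ B)) := by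
    simp only [Commute, SemiconjBy, leg₁₂_kronecker, leg₁₃_kronecker, ← mul_kronecker_mul,
      one_mul, mul_one]
  have h₁₂₂₃ : Commute (leg₁₂ (A ⊗ₖ B)) (leg₂₃ (A ⊗ₖ B)) := by
    simp only [Commute, SemiconjBy, leg₁₂_kronecker, leg₂₃_eq_kronecker, ← mul_kronecker_mul,
      one_mul, mul_one, hAB.eq]
  have h₁₃₂₃ : Commute (leg₁₃ (A ⊗ₖ B)) (leg₂₃ (A ⊗ₖ B)) := by
    simp only [Commute, SemiconjBy, leg₁₃_kronecker, leg₂₃_eq_kronecker, ← mul_kronecker_mul,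
      one_mul, mul_one]
  simp only [IsYangBaxter, map_add, map_smul, map_one]
  rw [(commute_smul_one_add_smul h₁₂₁₃ α β α β).eq, mul_assoc,
    (commute_smul_one_add_smul h₁₂₂₃ α β α β).eq, ← mul_assoc,
    (commute_smul_one_add_smul h₁₃₂₃ α β α β).eq]

end Legs

theorem finProdFinEquiv_assoc {l m n : ℕ} (a : Fin l) (b : Fin m) (c : Fin n) :
    (finProdFinEquiv (finProdFinEquiv (a, b), c) : ℕ) =
      finProdFinEquiv (a, finProdFinEquiv (b, c)) := by
  simp only [finProdFinEquiv_apply_val]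
  ring

/-- The lexicographic numbering of the basis of `ℂ² ⊗ ℂ² ⊗ ℂ²`, which turns `leg₁₂` and `leg₂₃` into
`RI` and `IR`. -/
def finTripleEquiv : Fin 2 × Fin 2 × Fin 2 ≃ Fin 8 :=
  ((Equiv.refl (Fin 2)).prodCongr finProdFinEquiv).trans finProdFinEquiv

theorem RI_reindexAlgEquiv (R : Matrix (Fin 2 × Fin 2) (Fin 2 × Fin 2) ℂ) :
    RI (reindexAlgEquiv ℂ ℂ finProdFinEquiv R) = reindexAlgEquiv ℂ ℂ finTripleEquiv (leg₁₂ R) := by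
  have hassoc : (finProdFinEquiv.prodCongr (.refl (Fin 2))).trans finProdFinEquiv =
      (Equiv.prodAssoc (Fin 2) (Fin 2) (Fin 2)).trans finTripleEquiv := by
    ext ⟨⟨a, b⟩, c⟩
    exact finProdFinEquiv_assoc a b c
  rw [leg₁₂_eq_reindex]
  exact congrArg (fun e ↦ reindex e e (R ⊗ₖ (1 : Matrix (Fin 2) (Fin 2) ℂ))) hassoc

theorem IR_reindexAlgEquiv (R : Matrix (Fin 2 × Fin 2) (Fin 2 × Fin 2) ℂ) :
    IR (reindexAlgEquiv ℂ ℂ finProdFinEquiv R) = reindexAlgEquiv ℂ ℂ finTripleEquiv (leg₂₃ R) :=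
  rfl

theorem IsBraided.RI_mul_IR_mul_RI {R : Matrix (Fin 2 × Fin 2) (Fin 2 × Fin 2) ℂ}
    (hR : IsBraided R) :
    let R' := reindexAlgEquiv ℂ ℂ finProdFinEquiv R
    RI R' * IR R' * RI R' = IR R' * RI R' * IR R' := by
  simp only [RI_reindexAlgEquiv, IR_reindexAlgEquiv, ← map_mul (reindexAlgEquiv ℂ ℂ _)]
  rw [hR]

theorem Rg_eq_reindexAlgEquiv_mul_flipMatrix (α β : ℂ) {q : ℂ} (hq : q ≠ 0) :
    Rg α β q = reindexAlgEquiv ℂ ℂ finProdFinEquiv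
      ((α • 1 + β • !![0, q; -1, 0] ⊗ₖ (q⁻¹ • !![0, q; -1, 0])) * flipMatrix (Fin 2) ℂ) := by
  rw [flipMatrix, PEquiv.mul_toMatrix_toPEquiv]
  ext i j
  fin_cases i <;> fin_cases j <;>
    simp [Rg, finProdFinEquiv, Fin.divNat, Fin.modNat, hq, one_apply]

/-- For all α, β and q ≠ 0, R_{α,β,q} satisfies the braided Yang–Baxter equation. -/
theorem Rg_yang_baxter (α β q : ℂ) (hq : q ≠ 0) :
    RI (Rg α β q) * IR (Rg α β q) * RI (Rg α β q)
      = IR (Rg α β q) * RI (Rg α β q) * IR (Rg α β q) := by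
  have hcomm : Commute !![0, q; -1, 0] (q⁻¹ • !![0, q; -1, 0]) := (Commute.refl _).smul_right _
  have hS := isYangBaxter_smul_one_add_smul_kronecker hcomm α β
  rw [Rg_eq_reindexAlgEquiv_mul_flipMatrix α β hq]
  exact hS.isBraided_mul_flipMatrix.RI_mul_IR_mul_RI
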